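/- Let v⁺, v⁻ : ℝ² → ℝ be three times continuously differentiable (ContDiff ℝ 3), fix (x,y) ∈ ℝ², and for each h > 0 let η_h ∈ [y, y+h] (the vertical intersection ordinate of the interface with the grid line). Define the jumps at (x, η_h) by [v] = v⁺(x,η_h) − v⁻(x,η_h), [v_y] = ∂_y v⁺(x,η_h) − ∂_y v⁻(x,η_h), [v_yy] = ∂_yy v⁺(x,η_h) − ∂_yy v⁻(x,η_h). Define the vertical truncation error at the exterior node, E_h = (v⁻(x,y+h) + v⁺(x,y−h) − 2·v⁺(x,y))/h² − ∂_yy v⁺(x,y), and the correction C_h⁺ = −(1/h²)·([v] + [v_y]·(y+h−η_h) + (1/2)·[v_yy]·(y+h−η_h)²). Then there exist constants C > 0 and δ > 0 such that for all 0 < h < δ and any choice of η_h ∈ [y, y+h], |E_h − C_h⁺| ≤ C·h. -/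

import Mathlib

lemma kfbi_taylor (f : ℝ → ℝ) (hf : ContDiff ℝ 3 f) (y : ℝ) :
    ∃ M > 0, ∀ a ∈ Set.Icc (y-1) (y+1), ∀ b ∈ Set.Icc (y-1) (y+1),
      |f b - (f a + deriv f a * (b - a) + (1/2) * iteratedDeriv 2 f a * (b - a)^2)|
        ≤ M * |b - a|^3 := by
  have hc : Continuous (iteratedDeriv 3 f) := hf.continuous_iteratedDeriv 3 (by norm_num)
  obtain ⟨K, hK⟩ := (isCompact_Icc (a := y-1) (b := y+1)).exists_bound_of_continuousOn
    hc.continuousOn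
  refine ⟨|K| + 1, by positivity, fun a ha b hb => ?_⟩
  rcases eq_or_ne a b with rfl | hab
  · simp
  have hu : UniqueDiffOn ℝ (Set.uIcc a b) := uniqueDiffOn_uIcc hab
  have e : ∀ n : ℕ, n ≤ 3 → ∀ z ∈ Set.uIcc a b,
      iteratedDerivWithin n f (Set.uIcc a b) z = iteratedDeriv n f z := fun n hn z hz =>
    iteratedDerivWithin_eq_iteratedDeriv hu
      ((hf.of_le (by exact_mod_cast hn)).contDiffAt) hz
  obtain ⟨z, hz, h⟩ := taylor_mean_remainder_lagrange (n := 2) (f := f) hab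
    (hf.of_le (by norm_num)).contDiffOn
    ((hf.contDiffOn.differentiableOn_iteratedDerivWithin (by norm_num) hu).mono
      Set.uIoo_subset_uIcc_self)
  have hz' := Set.uIoo_subset_uIcc_self hz
  have hzI : z ∈ Set.Icc (y-1) (y+1) := Set.uIcc_subset_Icc ha hb hz'
  rw [e _ (by norm_num) z hz'] at h
  simp only [taylorWithinEval_succ, taylor_within_zero_eval] at h
  rw [e _ (by norm_num) a Set.left_mem_uIcc, e _ (by norm_num) a Set.left_mem_uIcc] at h
  have h2 : f b - (f a + deriv f a * (b - a) + (1/2) * iteratedDeriv 2 f a * (b - a)^2)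
      = iteratedDeriv 3 f z * (b - a)^3 / 6 := by
    norm_num [Nat.factorial] at h
    linarith
  rw [h2, abs_div, abs_mul, abs_pow]
  have h3 := hK z hzI
  rw [Real.norm_eq_abs] at h3
  have h4 : |iteratedDeriv 3 f z| * |b-a|^3 ≤ (|K|+1) * |b-a|^3 := by
    gcongr
    linarith [le_abs_self K]
  have h5 : 0 ≤ |iteratedDeriv 3 f z| * |b-a|^3 := by positivity
  rw [abs_of_pos (by norm_num : (0:ℝ) < 6)]
  linarith


/-- First-order accuracy of the KFBI vertical correction at an exterior
irregular node: the corrected truncation error is `O(h)`. -/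
theorem kfbi_vertical_correction_exterior_first_order
    (vp vm : ℝ × ℝ → ℝ) (hvp : ContDiff ℝ 3 vp) (hvm : ContDiff ℝ 3 vm)
    (x y : ℝ) :
    ∃ C > 0, ∃ δ > 0, ∀ h : ℝ, 0 < h → h < δ →
      ∀ η : ℝ, η ∈ Set.Icc y (y + h) →
      |((vm (x, y + h) + vp (x, y - h) - 2 * vp (x, y)) / h ^ 2
            - iteratedDeriv 2 (fun t => vp (x, t)) y)
        - (-(1 / h ^ 2) *
            ((vp (x, η) - vm (x, η))
              + (deriv (fun t => vp (x, t)) η - deriv (fun t => vm (x, t)) η) * (y + h - η)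
              + (1 / 2) *
                  (iteratedDeriv 2 (fun t => vp (x, t)) η
                    - iteratedDeriv 2 (fun t => vm (x, t)) η) * (y + h - η) ^ 2))|
        ≤ C * h := by

  have hp : ContDiff ℝ 3 (fun t => vp (x, t)) := hvp.comp (by fun_prop)
  have hm : ContDiff ℝ 3 (fun t => vm (x, t)) := hvm.comp (by fun_prop)
  obtain ⟨M, hM, H⟩ := kfbi_taylor _ hp y
  obtain ⟨N, hN, G⟩ := kfbi_taylor _ hm y
  refine ⟨3 * M + N, by positivity, 1, one_pos, fun h h0 h1 η hη => ?_⟩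
  obtain ⟨hη1, hη2⟩ := hη
  have iη : η ∈ Set.Icc (y-1) (y+1) := ⟨by linarith, by linarith⟩
  have iy : y ∈ Set.Icc (y-1) (y+1) := ⟨by linarith, by linarith⟩
  have ip : y + h ∈ Set.Icc (y-1) (y+1) := ⟨by linarith, by linarith⟩
  have im : y - h ∈ Set.Icc (y-1) (y+1) := ⟨by linarith, by linarith⟩
  have A1 := H η iη _ ip
  have A2 := G η iη _ ip
  have A3 := H y iy _ ip
  have A4 := H y iy _ im
  have hle : |y + h - η| ^ 3 ≤ h ^ 3 := by
    rw [abs_of_nonneg (by linarith)]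
    exact pow_le_pow_left₀ (by linarith) (by linarith) 3
  have e3 : y + h - y = h := by ring
  have e4 : y - h - y = -h := by ring
  rw [e3, abs_of_pos h0] at A3
  rw [e4, abs_neg, abs_of_pos h0] at A4
  replace A1 := A1.trans (mul_le_mul_of_nonneg_left hle hM.le)
  replace A2 := A2.trans (mul_le_mul_of_nonneg_left hle hN.le)
  beta_reduce at A1 A2 A3 A4
  generalize iteratedDeriv 2 (fun t => vp (x, t)) y = a1 at *
  generalize iteratedDeriv 2 (fun t => vp (x, t)) η = a2 at *
  generalize iteratedDeriv 2 (fun t => vm (x, t)) η = a3 at *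
  generalize deriv (fun t => vp (x, t)) y = a4 at *
  generalize deriv (fun t => vp (x, t)) η = a5 at *
  generalize deriv (fun t => vm (x, t)) η = a6 at *
  rw [abs_le] at A1 A2 A3 A4
  have key : ∀ X : ℝ, |X * h^2| ≤ (3*M+N) * h^3 → |X| ≤ (3*M+N)*h := by
    intro X hX
    rw [abs_mul, abs_of_pos (by positivity : (0:ℝ) < h^2)] at hX
    have : 0 < h^2 := by positivity
    refine le_of_mul_le_mul_right ?_ this
    linarith
  apply key
  have hh : h ≠ 0 := h0.ne'
  have E : ∀ P Q : ℝ, (P / h^2 - a1 - (-(1/h^2) * Q)) * h^2 = P - a1 * h^2 + Q := by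
    intro P Q; field_simp; ring
  rw [E, abs_le]
  constructor <;> linarith [A1.1, A1.2, A2.1, A2.2, A3.1, A3.2, A4.1, A4.2]
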